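/- Assume 0 < m_i < n for all i. If s, s′ ∈ [0,∞)^h satisfy s_j ≤ s′_j for every j, then G_i(s) ≤ G_i(s′) for every i ∈ {1,…,h}; that is, the implicit map G = (G_1,…,G_h) is monotone for the componentwise order. -/

import Mathlib

/-!
Write `a_k = p_k ^ ht i` and let `A_k(s) = ∑_{j ≠ i} p_k ^ ht j * s_j`. With the `i`-th coordinate
set to `y`, the `k`-th summand of `D_i` is `a_k y / (1 + (a_k y + A_k(s)))`, which is strictly
increasing in `y` and weakly decreasing in `A_k(s)`, hence in the other coordinates. So if
`s ≤ s'` and `G_i(s') < G_i(s)`, then `D_i` at `s'` with entry `G_i(s')` would be strictly smaller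
than `D_i` at `s` with entry `G_i(s)`, although both equal `m_i`. This comparison is
`Dfun_update_lt`.
-/

open Finset Filter

/-- `D_i(s) = Σ_{k=1}^n p_k^{ht(i)} s_i / (1 + Σ_{j=1}^h p_k^{ht(j)} s_j)`.
Lists `1,…,h` are indexed by `i : Fin h` (index `i` stands for list `i+1`). -/
noncomputable def Dfun (n h : ℕ) (p : Fin n → ℝ) (ht : Fin h → ℕ) (s : Fin h → ℝ)
    (i : Fin h) : ℝ :=
  ∑ k, p k ^ ht i * s i / (1 + ∑ j, p k ^ ht j * s j)

/-- Flat height function on lists `1,…,h` (index `i : Fin h` stands for list `i+1`):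
`ht_F(i) = i` for `i ≤ h_N` and `ht_F(i) = i − h_N` for `i > h_N`. -/
def htFlat (h hN : ℕ) : Fin h → ℕ :=
  fun i => if i.val + 1 ≤ hN then i.val + 1 else i.val + 1 - hN

/-- Layered height function on lists `1,…,h`: `ht_L(i) = i`. -/
def htLayer (h : ℕ) : Fin h → ℕ := fun i => i.val + 1

lemma Dfun_update (n h : ℕ) (p : Fin n → ℝ) (ht : Fin h → ℕ) (s : Fin h → ℝ) (i : Fin h)
    (y : ℝ) :
    Dfun n h p ht (Function.update s i y) i =
      ∑ k, p k ^ ht i * y /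
        (1 + (p k ^ ht i * y + ∑ j ∈ univ.erase i, p k ^ ht j * s j)) := by
  unfold Dfun
  refine Finset.sum_congr rfl fun k _ => ?_
  rw [← Finset.add_sum_erase univ _ (mem_univ i), Function.update_self]
  congr 3
  refine Finset.sum_congr rfl fun j hj => ?_
  rw [Function.update_of_ne (Finset.ne_of_mem_erase hj)]

/-- Lowering the `i`-th entry strictly and raising the others weakly lowers `D_i` strictly. -/
lemma Dfun_update_lt {n h : ℕ} (hn : 0 < n) {p : Fin n → ℝ} (hp : ∀ k, 0 < p k)
    (ht : Fin h → ℕ) {s s' : Fin h → ℝ} (hs : ∀ j, 0 ≤ s j) (hle : ∀ j, s j ≤ s' j)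
    (i : Fin h) {y y' : ℝ} (hy' : 0 < y') (hlt : y' < y) :
    Dfun n h p ht (Function.update s' i y') i < Dfun n h p ht (Function.update s i y) i := by
  rw [Dfun_update, Dfun_update]
  refine Finset.sum_lt_sum_of_nonempty ⟨⟨0, hn⟩, mem_univ _⟩ fun k _ => ?_
  have ha : 0 < p k ^ ht i := pow_pos (hp k) _
  have hA : 0 ≤ ∑ j ∈ univ.erase i, p k ^ ht j * s j :=
    Finset.sum_nonneg fun j _ => mul_nonneg (pow_pos (hp k) _).le (hs j)
  have hAA : ∑ j ∈ univ.erase i, p k ^ ht j * s j ≤ ∑ j ∈ univ.erase i, p k ^ ht j * s' j :=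
    Finset.sum_le_sum fun j _ => mul_le_mul_of_nonneg_left (hle j) (pow_pos (hp k) _).le
  have hb' : 0 < p k ^ ht i * y' := mul_pos ha hy'
  have hb : p k ^ ht i * y' < p k ^ ht i * y := mul_lt_mul_of_pos_left hlt ha
  generalize p k ^ ht i * y' = b' at *
  generalize p k ^ ht i * y = b at *
  generalize ∑ j ∈ univ.erase i, p k ^ ht j * s j = A at *
  generalize ∑ j ∈ univ.erase i, p k ^ ht j * s' j = A' at *
  rw [div_lt_div_iff₀ (by linarith) (by linarith)]
  nlinarith [mul_le_mul hb.le hAA hA (hb'.trans hb).le]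

/-- the implicit map `G = (G_1,…,G_h)`, where `G_i(s)` is the unique `y > 0`
with `D_i(s_1,…,s_{i−1}, y, s_{i+1},…,s_h) = m_i`, is monotone for the componentwise
order on `[0,∞)^h`. -/
theorem G_monotone
    (n h hN : ℕ) (hn : 2 ≤ n) (hh : 2 ≤ h) (hN1 : 1 ≤ hN) (hNh : hN < h)
    (ht : Fin h → ℕ) (hht : ht = htFlat h hN ∨ ht = htLayer h)
    (p : Fin n → ℝ) (hp : ∀ k, 0 < p k)
    (m : Fin h → ℝ) (hm : ∀ i, 0 < m i ∧ m i < n)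
    (G : (Fin h → ℝ) → Fin h → ℝ)
    (hG : ∀ s : Fin h → ℝ, (∀ j, 0 ≤ s j) → ∀ i,
      0 < G s i ∧ Dfun n h p ht (Function.update s i (G s i)) i = m i)
    (s s' : Fin h → ℝ) (hs : ∀ j, 0 ≤ s j) (hs' : ∀ j, 0 ≤ s' j)
    (hle : ∀ j, s j ≤ s' j) :
    ∀ i, G s i ≤ G s' i := by
  intro i
  obtain ⟨_, hD⟩ := hG s hs i
  obtain ⟨hpos', hD'⟩ := hG s' hs' i
  by_contra! hlt
  have := Dfun_update_lt (by omega) hp ht hs hle i hpos' hlt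
  rw [hD, hD'] at this
  exact lt_irrefl _ this
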